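/- In the calculus λ_S, the open terms ⟨x i⟩ and (λy.⟨x i⟩) ⟨x i⟩ (where i := λz.z and y is not free in the terms) are related by the open extension of contextual equivalence: for every closed value v, ⟨v i⟩ ≈ (λy.⟨v i⟩) ⟨v i⟩. -/

import Mathlib

namespace LambdaS

/-- Terms of the calculus λ_S: variables, λ-abstractions, applications,
the shift operator `S k.t`, and the reset delimiter `⟨t⟩`. -/
inductive Tm : Type
  | var : ℕ → Tm
  | lam : ℕ → Tm → Tm
  | app : Tm → Tm → Tm
  | shift : ℕ → Tm → Tm
  | reset : Tm → Tm
  deriving DecidableEq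

/-- A variable fresh for a finite set of variables. -/
def fresh (s : Finset ℕ) : ℕ := if h : s.Nonempty then s.max' h + 1 else 0

namespace Tm

/-- Free variables. -/
def fv : Tm → Finset ℕ
  | var x => {x}
  | lam x t => fv t \ {x}
  | app t u => fv t ∪ fv u
  | shift k t => fv t \ {k}
  | reset t => fv t

def size : Tm → ℕ
  | var _ => 1
  | lam _ t => size t + 1
  | app t u => size t + size u + 1
  | shift _ t => size t + 1
  | reset t => size t + 1

/-- Renaming of free occurrences of a variable (used for α-renaming with a
fresh target variable). -/
def rename : Tm → ℕ → ℕ → Tm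
  | var w, y, z => if w = y then var z else var w
  | lam w t, y, z => if w = y then lam w t else lam w (rename t y z)
  | app t u, y, z => app (rename t y z) (rename u y z)
  | shift w t, y, z => if w = y then shift w t else shift w (rename t y z)
  | reset t, y, z => reset (rename t y z)

theorem size_rename (t : Tm) (y z : ℕ) : size (rename t y z) = size t := by
  induction t generalizing y z with
  | var w => simp only [rename]; split <;> rfl
  | lam w t ih => simp only [rename]; split <;> simp [size, ih]
  | app t u iht ihu => simp [rename, size, iht, ihu]
  | shift w t ih => simp only [rename]; split <;> simp [size, ih]
  | reset t ih => simp [rename, size, ih]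

/-- Capture-avoiding substitution `t{v/x}` of `v` for the free occurrences of
`x` in `t`; bound variables are α-renamed when needed. -/
def subst : Tm → ℕ → Tm → Tm
  | var w, x, v => if w = x then v else var w
  | lam y t, x, v =>
      if y = x then lam y t
      else if y ∈ fv v then
        lam (fresh (fv v ∪ fv t ∪ {x}))
          (subst (rename t y (fresh (fv v ∪ fv t ∪ {x}))) x v)
      else lam y (subst t x v)
  | app t u, x, v => app (subst t x v) (subst u x v)
  | shift y t, x, v =>
      if y = x then shift y t
      else if y ∈ fv v then
        shift (fresh (fv v ∪ fv t ∪ {x}))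
          (subst (rename t y (fresh (fv v ∪ fv t ∪ {x}))) x v)
      else shift y (subst t x v)
  | reset t, x, v => reset (subst t x v)
termination_by t _ _ => size t
decreasing_by all_goals simp [size_rename, size] <;> omega

end Tm

/-- Values: variables and λ-abstractions. -/
inductive IsValue : Tm → Prop
  | var (x : ℕ) : IsValue (Tm.var x)
  | lam (x : ℕ) (t : Tm) : IsValue (Tm.lam x t)

/-- A term is closed if it has no free variables. -/
def Closed (t : Tm) : Prop := t.fv = ∅

/-- Pure evaluation contexts E ::= □ | v E | E t. -/
inductive ECtx : Type
  | hole : ECtx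
  | appR : (v : Tm) → IsValue v → ECtx → ECtx
  | appL : ECtx → Tm → ECtx

def ECtx.plug : ECtx → Tm → Tm
  | .hole, t => t
  | .appR v _ E, t => Tm.app v (E.plug t)
  | .appL E u, t => Tm.app (E.plug t) u

def ECtx.fv : ECtx → Finset ℕ
  | .hole => ∅
  | .appR v _ E => v.fv ∪ E.fv
  | .appL E u => E.fv ∪ u.fv

/-- Composition of pure contexts: `(E.comp E').plug t = E.plug (E'.plug t)`. -/
def ECtx.comp : ECtx → ECtx → ECtx
  | .hole, E' => E'
  | .appR v hv E, E' => .appR v hv (E.comp E')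
  | .appL E u, E' => .appL (E.comp E') u

/-- Evaluation contexts F ::= □ | v F | F t | ⟨F⟩. -/
inductive FCtx : Type
  | hole : FCtx
  | appR : (v : Tm) → IsValue v → FCtx → FCtx
  | appL : FCtx → Tm → FCtx
  | reset : FCtx → FCtx

def FCtx.plug : FCtx → Tm → Tm
  | .hole, t => t
  | .appR v _ F, t => Tm.app v (F.plug t)
  | .appL F u, t => Tm.app (F.plug t) u
  | .reset F, t => Tm.reset (F.plug t)

def FCtx.fv : FCtx → Finset ℕ
  | .hole => ∅
  | .appR v _ F => v.fv ∪ F.fv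
  | .appL F u => F.fv ∪ u.fv
  | .reset F => F.fv

/-- The function `λx.⟨E[x]⟩` representing the captured delimited context `E`,
where `x` is chosen fresh (in particular `x ∉ fv E`). -/
def contFun (E : ECtx) : Tm :=
  Tm.lam (fresh E.fv) (Tm.reset (E.plug (Tm.var (fresh E.fv))))

/-- Call-by-value reduction →_v of λ_S. -/
inductive Red : Tm → Tm → Prop
  | beta (F : FCtx) (x : ℕ) (t v : Tm) :
      IsValue v →
      Red (F.plug (Tm.app (Tm.lam x t) v)) (F.plug (t.subst x v))
  | capture (F : FCtx) (E : ECtx) (k : ℕ) (t : Tm) :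
      Red (F.plug (Tm.reset (E.plug (Tm.shift k t))))
          (F.plug (Tm.reset (t.subst k (contFun E))))
  | resetVal (F : FCtx) (v : Tm) :
      IsValue v →
      Red (F.plug (Tm.reset v)) (F.plug v)

/-- A stuck term: not a value and unable to reduce. -/
def Stuck (t : Tm) : Prop := ¬ IsValue t ∧ ∀ t', ¬ Red t t'

/-- Normal forms: values and stuck terms. -/
def NormalForm (t : Tm) : Prop := IsValue t ∨ Stuck t

/-- A control-stuck term has the form E[S k.t]. -/
def ControlStuck (t : Tm) : Prop :=
  ∃ (E : ECtx) (k : ℕ) (s : Tm), t = E.plug (Tm.shift k s)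

/-- Evaluation: `t ⇓ t'` iff `t →_v* t'` and `t'` is a normal form. -/
def Evals (t t' : Tm) : Prop := Relation.ReflTransGen Red t t' ∧ NormalForm t'

/-- `t` evaluates to some value. -/
def EvalsToValue (t : Tm) : Prop := ∃ v, Relation.ReflTransGen Red t v ∧ IsValue v

/-- `t` evaluates to some control-stuck term. -/
def EvalsToStuck (t : Tm) : Prop :=
  ∃ s, Relation.ReflTransGen Red t s ∧ ControlStuck s

/-- General contexts C ::= □ | λx.C | t C | C t | S k.C | ⟨C⟩. -/
inductive Ctx : Type
  | hole : Ctx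
  | lam : ℕ → Ctx → Ctx
  | appL : Ctx → Tm → Ctx
  | appR : Tm → Ctx → Ctx
  | shift : ℕ → Ctx → Ctx
  | reset : Ctx → Ctx

def Ctx.plug : Ctx → Tm → Tm
  | .hole, t => t
  | .lam x C, t => Tm.lam x (C.plug t)
  | .appL C u, t => Tm.app (C.plug t) u
  | .appR u C, t => Tm.app u (C.plug t)
  | .shift k C, t => Tm.shift k (C.plug t)
  | .reset C, t => Tm.reset (C.plug t)

def Ctx.fv : Ctx → Finset ℕ
  | .hole => ∅
  | .lam x C => C.fv \ {x}
  | .appL C u => C.fv ∪ u.fv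
  | .appR u C => u.fv ∪ C.fv
  | .shift k C => C.fv \ {k}
  | .reset C => C.fv

/-- Contextual equivalence ≈ for the relaxed semantics (on closed terms):
tests evaluation to values and evaluation to control-stuck terms in every
closed context. -/
def CtxEquiv (t0 t1 : Tm) : Prop :=
  ∀ C : Ctx, C.fv = ∅ →
    (EvalsToValue (C.plug t0) ↔ EvalsToValue (C.plug t1)) ∧
    (EvalsToStuck (C.plug t0) ↔ EvalsToStuck (C.plug t1))

/-- Contextual equivalence ≈_p for the original semantics: tests evaluation to
values of ⟨C[·]⟩ in every closed context C. -/
def CtxEquivP (t0 t1 : Tm) : Prop :=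
  ∀ C : Ctx, C.fv = ∅ →
    (EvalsToValue (Tm.reset (C.plug t0)) ↔ EvalsToValue (Tm.reset (C.plug t1)))

/-- Contextual equivalence ≈_E testing only with closed evaluation contexts. -/
def ECtxEquiv (t0 t1 : Tm) : Prop :=
  ∀ F : FCtx, F.fv = ∅ →
    (EvalsToValue (F.plug t0) ↔ EvalsToValue (F.plug t1)) ∧
    (EvalsToStuck (F.plug t0) ↔ EvalsToStuck (F.plug t1))

/-- Applicative simulation. -/
def IsAppSim (R : Tm → Tm → Prop) : Prop :=
  ∀ t0 t1, R t0 t1 →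
    (∀ t0', Red t0 t0' →
      ∃ t1', Relation.ReflTransGen Red t1 t1' ∧ R t0' t1') ∧
    (∀ x t0', t0 = Tm.lam x t0' →
      ∃ t1', Relation.ReflTransGen Red t1 (Tm.lam x t1') ∧
        ∀ v, IsValue v → Closed v → R (t0'.subst x v) (t1'.subst x v)) ∧
    (∀ (E0 : ECtx) (k : ℕ) (t0' : Tm), t0 = E0.plug (Tm.shift k t0') →
      ∃ (E1 : ECtx) (t1' : Tm),
        Relation.ReflTransGen Red t1 (E1.plug (Tm.shift k t1')) ∧
        ∀ E : ECtx, E.fv = ∅ →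
          R (Tm.reset (t0'.subst k (contFun (E.comp E0))))
            (Tm.reset (t1'.subst k (contFun (E.comp E1)))))

/-- Applicative bisimulation. -/
def IsAppBisim (R : Tm → Tm → Prop) : Prop :=
  IsAppSim R ∧ IsAppSim (fun a b => R b a)

/-- Applicative bisimilarity ≈_app: the largest applicative bisimulation. -/
def AppBisim (t0 t1 : Tm) : Prop := ∃ R, IsAppBisim R ∧ R t0 t1

/-- Simultaneous substitution (used only with closing substitutions mapping
variables to closed values, so no capture can occur). -/
def Tm.msubst : Tm → (ℕ → Tm) → Tm
  | .var x, σ => σ x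
  | .lam x t, σ => Tm.lam x (t.msubst (Function.update σ x (Tm.var x)))
  | .app t u, σ => Tm.app (t.msubst σ) (u.msubst σ)
  | .shift k t, σ => Tm.shift k (t.msubst (Function.update σ k (Tm.var k)))
  | .reset t, σ => Tm.reset (t.msubst σ)

/-- Open extension of a relation on closed terms: relate `t0σ` and `t1σ` for
every substitution σ mapping variables to closed values. -/
def OpenExt (R : Tm → Tm → Prop) (t0 t1 : Tm) : Prop :=
  ∀ σ : ℕ → Tm, (∀ x, IsValue (σ x) ∧ Closed (σ x)) →
    R (t0.msubst σ) (t1.msubst σ)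

/-- ω := λx.x x. -/
def omegaTm : Tm := Tm.lam 0 (Tm.app (Tm.var 0) (Tm.var 0))

/-- Ω := ω ω, a diverging term. -/
def OmegaTm : Tm := Tm.app omegaTm omegaTm


/-- i := λz.z, the identity. -/
def idTm : Tm := Tm.lam 0 (Tm.var 0)

/-! ### Structural small-step presentation -/

inductive Step : Tm → Tm → Prop
  | beta (x : ℕ) (t v : Tm) : IsValue v → Step (Tm.app (Tm.lam x t) v) (t.subst x v)
  | capture (E : ECtx) (k : ℕ) (t : Tm) :
      Step (Tm.reset (E.plug (Tm.shift k t))) (Tm.reset (t.subst k (contFun E)))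
  | resetVal (v : Tm) : IsValue v → Step (Tm.reset v) v
  | appL (t t' u : Tm) : Step t t' → Step (Tm.app t u) (Tm.app t' u)
  | appR (v t t' : Tm) : IsValue v → Step t t' → Step (Tm.app v t) (Tm.app v t')
  | reset (t t' : Tm) : Step t t' → Step (Tm.reset t) (Tm.reset t')

theorem Step.plug (F : FCtx) {t t' : Tm} (h : Step t t') : Step (F.plug t) (F.plug t') := by
  induction F with
  | hole => exact h
  | appR v hv F ih => exact Step.appR _ _ _ hv ih
  | appL F u ih => exact Step.appL _ _ _ ih
  | reset F ih => exact Step.reset _ _ ih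

theorem red_iff_step {t t' : Tm} : Red t t' ↔ Step t t' := by
  constructor
  · intro h
    cases h with
    | beta F x t v hv => exact Step.plug F (Step.beta x t v hv)
    | capture F E k t => exact Step.plug F (Step.capture E k t)
    | resetVal F v hv => exact Step.plug F (Step.resetVal v hv)
  · intro h
    induction h with
    | beta x t v hv => exact Red.beta .hole x t v hv
    | capture E k t => exact Red.capture .hole E k t
    | resetVal v hv => exact Red.resetVal .hole v hv
    | appL t t' u _ ih =>
      cases ih with
      | beta F x t v hv => exact Red.beta (.appL F u) x t v hv
      | capture F E k t => exact Red.capture (.appL F u) E k t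
      | resetVal F v hv => exact Red.resetVal (.appL F u) v hv
    | appR w t t' hw _ ih =>
      cases ih with
      | beta F x t v hv => exact Red.beta (.appR w hw F) x t v hv
      | capture F E k t => exact Red.capture (.appR w hw F) E k t
      | resetVal F v hv => exact Red.resetVal (.appR w hw F) v hv
    | reset t t' _ ih =>
      cases ih with
      | beta F x t v hv => exact Red.beta (.reset F) x t v hv
      | capture F E k t => exact Red.capture (.reset F) E k t
      | resetVal F v hv => exact Red.resetVal (.reset F) v hv

theorem red_eq_step : Red = Step := by
  funext t t'; exact propext red_iff_step

theorem value_no_step {t t' : Tm} (hv : IsValue t) : ¬ Step t t' := by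
  intro h; cases hv <;> cases h

theorem value_not_plug {E : ECtx} {k : ℕ} {s : Tm} : ¬ IsValue (E.plug (Tm.shift k s)) := by
  intro h; cases E <;> cases h

theorem plug_inj {E E' : ECtx} {k k' : ℕ} {s s' : Tm}
    (h : E.plug (Tm.shift k s) = E'.plug (Tm.shift k' s')) : E = E' ∧ k = k' ∧ s = s' := by
  induction E generalizing E' with
  | hole => cases E' <;> simp_all [ECtx.plug]
  | appR v hv E ih =>
    cases E' with
    | hole => simp [ECtx.plug] at h
    | appR v' hv' E' =>
      simp only [ECtx.plug, Tm.app.injEq] at h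
      obtain ⟨rfl, h⟩ := h
      obtain ⟨rfl, rfl, rfl⟩ := ih h
      simp
    | appL E' u =>
      simp only [ECtx.plug, Tm.app.injEq] at h
      obtain ⟨rfl, h⟩ := h
      exact absurd hv value_not_plug
  | appL E u ih =>
    cases E' with
    | hole => simp [ECtx.plug] at h
    | appR v' hv' E' =>
      simp only [ECtx.plug, Tm.app.injEq] at h
      obtain ⟨rfl, h⟩ := h
      exact absurd hv' value_not_plug
    | appL E' u' =>
      simp only [ECtx.plug, Tm.app.injEq] at h
      obtain ⟨h, rfl⟩ := h
      obtain ⟨rfl, rfl, rfl⟩ := ih h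
      simp

theorem plug_no_step {E : ECtx} {k : ℕ} {s t' : Tm} : ¬ Step (E.plug (Tm.shift k s)) t' := by
  induction E generalizing t' with
  | hole => intro h; cases h
  | appR v hv E ih =>
    intro h
    simp only [ECtx.plug] at h
    generalize hu : E.plug (Tm.shift k s) = u at h
    cases h with
    | beta x t _ hv' => subst hu; exact value_not_plug hv'
    | appL _ _ _ h' => exact value_no_step hv h'
    | appR _ _ _ _ h' => subst hu; exact ih h'
  | appL E u ih =>
    intro h
    simp only [ECtx.plug] at h
    generalize hw : E.plug (Tm.shift k s) = w at h
    cases h with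
    | beta x t _ hv' => exact value_not_plug (hw ▸ IsValue.lam x t)
    | appL _ _ _ h' => subst hw; exact ih h'
    | appR _ _ _ hv' h' => subst hw; exact value_not_plug hv'

theorem Step.det {t a b : Tm} (ha : Step t a) (hb : Step t b) : a = b := by
  induction ha generalizing b with
  | beta x t v hv =>
    cases hb with
    | beta => rfl
    | appL _ _ _ h => exact absurd h (value_no_step (.lam _ _))
    | appR _ _ _ _ h => exact absurd h (value_no_step hv)
  | capture E k t =>
    generalize hu : E.plug (Tm.shift k t) = u at hb
    cases hb with
    | capture E' k' t' => obtain ⟨rfl, rfl, rfl⟩ := plug_inj hu; rfl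
    | resetVal _ hv => subst hu; exact absurd hv value_not_plug
    | reset _ _ h => subst hu; exact absurd h plug_no_step
  | resetVal v hv =>
    cases hb with
    | capture E' k' t' => exact absurd hv value_not_plug
    | resetVal _ hv => rfl
    | reset _ _ h => exact absurd h (value_no_step hv)
  | appL t t' u h ih =>
    cases hb with
    | beta => exact absurd h (value_no_step (.lam _ _))
    | appL _ _ _ h' => rw [ih h']
    | appR _ _ _ hv _ => exact absurd h (value_no_step hv)
  | appR v t t' hv h ih =>
    cases hb with
    | beta _ _ _ hv' => exact absurd h (value_no_step hv')
    | appL _ _ _ h' => exact absurd h' (value_no_step hv)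
    | appR _ _ _ _ h' => rw [ih h']
  | reset t t' h ih =>
    cases hb with
    | capture E' k' t' => exact absurd h plug_no_step
    | resetVal _ hv => exact absurd h (value_no_step hv)
    | reset _ _ h' => rw [ih h']

/-! ### Free variables -/

theorem fresh_not_mem (s : Finset ℕ) : fresh s ∉ s := by
  intro h
  have hne : s.Nonempty := ⟨_, h⟩
  have h2 := s.le_max' _ h
  simp only [fresh, hne, dif_pos] at h2
  omega

theorem subst_of_not_mem {t v : Tm} {x : ℕ} (hv : Closed v) (hx : x ∉ t.fv) :
    t.subst x v = t := by
  unfold Closed at hv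
  induction t with
  | var w => simp [Tm.fv] at hx; simp [Tm.subst, Ne.symm hx]
  | lam w t ih =>
    by_cases h : w = x
    · simp [Tm.subst, h]
    · simp [Tm.fv, Ne.symm h] at hx; simp [Tm.subst, h, hv, ih hx]
  | app t u iht ihu => simp_all [Tm.subst, Tm.fv]
  | shift w t ih =>
    by_cases h : w = x
    · simp [Tm.subst, h]
    · simp [Tm.fv, Ne.symm h] at hx; simp [Tm.subst, h, hv, ih hx]
  | reset t ih => simp_all [Tm.subst, Tm.fv]

theorem fv_subst {t v : Tm} {x : ℕ} (hv : Closed v) : (t.subst x v).fv = t.fv \ {x} := by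
  unfold Closed at hv
  induction t with
  | var w =>
    by_cases h : w = x
    · simp [Tm.subst, Tm.fv, h, hv]
    · ext a; simp [Tm.subst, Tm.fv, h]; rintro rfl; exact h
  | lam w t ih =>
    by_cases h : w = x
    · simp [Tm.subst, Tm.fv, h]
    · simp only [Tm.subst, h, hv, Tm.fv, ih]; ext a; simp [ih, Tm.fv]; tauto
  | app t u iht ihu => simp only [Tm.subst, Tm.fv, iht, ihu]; ext a; simp; tauto
  | shift w t ih =>
    by_cases h : w = x
    · simp [Tm.subst, Tm.fv, h]
    · simp only [Tm.subst, h, hv, Tm.fv, ih]; ext a; simp [ih, Tm.fv]; tauto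
  | reset t ih => simp_all [Tm.subst, Tm.fv]

theorem fv_plug (E : ECtx) (t : Tm) : (E.plug t).fv = E.fv ∪ t.fv := by
  induction E with
  | hole => simp [ECtx.plug, ECtx.fv]
  | appR v hv E ih => simp [ECtx.plug, ECtx.fv, Tm.fv, ih]
  | appL E u ih => simp only [ECtx.plug, ECtx.fv, Tm.fv, ih]; ext a; simp; tauto

theorem closed_contFun {E : ECtx} (h : E.fv = ∅) : Closed (contFun E) := by
  simp [Closed, contFun, Tm.fv, fv_plug, h]

theorem Step.closed {t t' : Tm} (h : Step t t') (hc : Closed t) : Closed t' := by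
  unfold Closed at *
  induction h with
  | beta x t v hv =>
    simp only [Tm.fv, Finset.union_eq_empty] at hc
    rw [fv_subst hc.2, hc.1]
  | capture E k t =>
    simp only [Tm.fv, fv_plug, Finset.union_eq_empty] at hc
    rw [Tm.fv, fv_subst (closed_contFun hc.1), hc.2]
  | resetVal v hv => simpa [Tm.fv] using hc
  | appL t t' u _ ih => simp_all [Tm.fv]
  | appR v t t' hv _ ih => simp_all [Tm.fv]
  | reset t t' _ ih => simp_all [Tm.fv]

theorem steps_closed {t t' : Tm} (h : Relation.ReflTransGen Step t t') (hc : Closed t) :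
    Closed t' := by
  induction h with
  | refl => exact hc
  | tail _ h ih => exact h.closed ih

theorem steps_plug (F : FCtx) {t t' : Tm} (h : Relation.ReflTransGen Step t t') :
    Relation.ReflTransGen Step (F.plug t) (F.plug t') := by
  induction h with
  | refl => exact .refl
  | tail _ h ih => exact ih.tail (h.plug F)

/-- Progress for closed terms. -/
theorem progress {t : Tm} (hc : Closed t) : IsValue t ∨ ControlStuck t ∨ ∃ t', Step t t' := by
  unfold Closed at hc
  induction t with
  | var x => exact .inl (.var x)
  | lam x t => exact .inl (.lam x t)
  | shift k t => exact .inr (.inl ⟨.hole, k, t, rfl⟩)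
  | app t u iht ihu =>
    simp only [Tm.fv, Finset.union_eq_empty] at hc
    rcases iht hc.1 with h | ⟨E, k, s, rfl⟩ | ⟨t', h⟩
    · rcases ihu hc.2 with h' | ⟨E, k, s, rfl⟩ | ⟨t', h'⟩
      · cases h with
        | var x => simp [Tm.fv] at hc
        | lam x b => exact .inr (.inr ⟨_, .beta x b u h'⟩)
      · exact .inr (.inl ⟨.appR t h E, k, s, rfl⟩)
      · exact .inr (.inr ⟨_, .appR _ _ _ h h'⟩)
    · exact .inr (.inl ⟨.appL E u, k, s, rfl⟩)
    · exact .inr (.inr ⟨_, .appL _ _ _ h⟩)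
  | reset t ih =>
    rcases ih hc with h | ⟨E, k, s, rfl⟩ | ⟨t', h⟩
    · exact .inr (.inr ⟨_, .resetVal _ h⟩)
    · exact .inr (.inr ⟨_, .capture _ _ _⟩)
    · exact .inr (.inr ⟨_, .reset _ _ h⟩)

/-! ### Compatible closure of a pair -/

inductive Rel (p q : Tm) : Tm → Tm → Prop
  | base : Rel p q p q
  | var (x : ℕ) : Rel p q (.var x) (.var x)
  | lam (x : ℕ) {t t' : Tm} : Rel p q t t' → Rel p q (.lam x t) (.lam x t')
  | app {t t' u u' : Tm} : Rel p q t t' → Rel p q u u' → Rel p q (.app t u) (.app t' u')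
  | shift (x : ℕ) {t t' : Tm} : Rel p q t t' → Rel p q (.shift x t) (.shift x t')
  | reset {t t' : Tm} : Rel p q t t' → Rel p q (.reset t) (.reset t')

theorem Rel.rfl' {p q : Tm} (t : Tm) : Rel p q t t := by
  induction t with
  | var x => exact .var x
  | lam x t ih => exact .lam x ih
  | app t u iht ihu => exact .app iht ihu
  | shift x t ih => exact .shift x ih
  | reset t ih => exact .reset ih

theorem Rel.ctx {p q : Tm} (C : Ctx) : Rel p q (C.plug p) (C.plug q) := by
  induction C with
  | hole => exact .base
  | lam x C ih => exact .lam x ih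
  | appL C u ih => exact .app ih (.rfl' u)
  | appR u C ih => exact .app (.rfl' u) ih
  | shift k C ih => exact .shift k ih
  | reset C ih => exact .reset ih

theorem Rel.fv {p q t t' : Tm} (hp : Closed p) (hq : Closed q) (h : Rel p q t t') :
    t.fv = t'.fv := by
  unfold Closed at *
  induction h <;> simp_all [Tm.fv]

theorem Rel.subst {p q t t' v v' : Tm} {x : ℕ} (hp : Closed p) (hq : Closed q)
    (h : Rel p q t t') (hv : Closed v) (hr : Rel p q v v') :
    Rel p q (t.subst x v) (t'.subst x v') := by
  have hv' : Closed v' := by unfold Closed at *; rw [← hr.fv hp hq, hv]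
  induction h with
  | base =>
    rw [subst_of_not_mem hv (by rw [hp]; simp), subst_of_not_mem hv' (by rw [hq]; simp)]
    exact .base
  | var y =>
    by_cases h : y = x
    · simpa [Tm.subst, h] using hr
    · simpa [Tm.subst, h] using Rel.var y
  | lam y ht ih =>
    unfold Closed at hv hv'
    by_cases h : y = x
    · simpa [Tm.subst, h] using Rel.lam x ht
    · simpa [Tm.subst, h, hv, hv'] using Rel.lam y ih
  | app _ _ iht ihu => simpa [Tm.subst] using Rel.app iht ihu
  | shift y ht ih =>
    unfold Closed at hv hv'
    by_cases h : y = x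
    · simpa [Tm.subst, h] using Rel.shift x ht
    · simpa [Tm.subst, h, hv, hv'] using Rel.shift y ih
  | reset _ ih => simpa [Tm.subst] using Rel.reset ih

/-- The four ways in which related closed terms can behave. -/
def Outcome (p q t t' : Tm) : Prop :=
  (IsValue t ∧ IsValue t') ∨
  (∃ (E E' : ECtx) (k : ℕ) (s s' : Tm), t = E.plug (.shift k s) ∧ t' = E'.plug (.shift k s') ∧
    Rel p q s s' ∧ E.fv = E'.fv ∧ ∀ a a', Rel p q a a' → Rel p q (E.plug a) (E'.plug a')) ∨
  (∃ s s', Step t s ∧ Step t' s' ∧ Rel p q s s') ∨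
  (∃ F F' : FCtx, t = F.plug p ∧ t' = F'.plug q ∧
    ∀ a a', Rel p q a a' → Rel p q (F.plug a) (F'.plug a'))

theorem Rel.outcome {p q t t' : Tm} (hp : Closed p) (hq : Closed q)
    (hpv : ¬ IsValue p) (h : Rel p q t t') (hc : Closed t) : Outcome p q t t' := by
  unfold Closed at hc
  induction h with
  | base => exact .inr (.inr (.inr ⟨.hole, .hole, rfl, rfl, fun _ _ h => h⟩))
  | var x => exact .inl ⟨.var x, .var x⟩
  | lam x _ _ => exact .inl ⟨.lam _ _, .lam _ _⟩
  | shift k h _ =>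
    exact .inr (.inl ⟨.hole, .hole, k, _, _, rfl, rfl, h, rfl, fun _ _ h => h⟩)
  | @app t t' u u' ht hu iht ihu =>
    simp only [Tm.fv, Finset.union_eq_empty] at hc
    rcases iht hc.1 with ⟨hv, hv'⟩ | ⟨E, E', k, s, s', rfl, rfl, hs, hf, hE⟩ |
      ⟨s, s', h1, h2, h3⟩ | ⟨F, F', rfl, rfl, hF⟩
    · rcases ihu hc.2 with ⟨hw, hw'⟩ | ⟨E, E', k, s, s', rfl, rfl, hs, hf, hE⟩ |
        ⟨s, s', h1, h2, h3⟩ | ⟨F, F', rfl, rfl, hF⟩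
      · cases ht with
        | base => exact absurd hv hpv
        | var x => simp [Tm.fv] at hc
        | lam x hb =>
          exact .inr (.inr (.inl ⟨_, _, .beta _ _ _ hw, .beta _ _ _ hw', hb.subst hp hq hc.2 hu⟩))
        | app => cases hv
        | shift => cases hv
        | reset => cases hv
      · refine .inr (.inl ⟨.appR t hv E, .appR t' hv' E', k, s, s', rfl, rfl, hs, ?_, ?_⟩)
        · simp [ECtx.fv, hf, ht.fv hp hq]
        · intro a a' h; exact .app ht (hE _ _ h)
      · exact .inr (.inr (.inl ⟨_, _, .appR _ _ _ hv h1, .appR _ _ _ hv' h2, .app ht h3⟩))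
      · exact .inr (.inr (.inr ⟨.appR t hv F, .appR t' hv' F', rfl, rfl,
          fun a a' h => .app ht (hF _ _ h)⟩))
    · refine .inr (.inl ⟨.appL E u, .appL E' u', k, s, s', rfl, rfl, hs, ?_, ?_⟩)
      · simp [ECtx.fv, hf, hu.fv hp hq]
      · intro a a' h; exact .app (hE _ _ h) hu
    · exact .inr (.inr (.inl ⟨_, _, .appL _ _ _ h1, .appL _ _ _ h2, .app h3 hu⟩))
    · exact .inr (.inr (.inr ⟨.appL F u, .appL F' u', rfl, rfl,
          fun a a' h => .app (hF _ _ h) hu⟩))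
  | @reset t t' ht iht =>
    rcases iht hc with ⟨hv, hv'⟩ | ⟨E, E', k, s, s', rfl, rfl, hs, hf, hE⟩ |
      ⟨s, s', h1, h2, h3⟩ | ⟨F, F', rfl, rfl, hF⟩
    · exact .inr (.inr (.inl ⟨_, _, .resetVal _ hv, .resetVal _ hv', ht⟩))
    · refine .inr (.inr (.inl ⟨_, _, .capture E k s, .capture E' k s', .reset ?_⟩))
      simp only [Tm.fv, fv_plug, Finset.union_eq_empty] at hc
      refine hs.subst hp hq (closed_contFun hc.1) ?_
      unfold contFun
      rw [← hf]
      exact .lam _ (.reset (hE _ _ (.var _)))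
    · exact .inr (.inr (.inl ⟨_, _, .reset _ _ h1, .reset _ _ h2, .reset h3⟩))
    · exact .inr (.inr (.inr ⟨.reset F, .reset F', rfl, rfl, fun a a' h => .reset (hF _ _ h)⟩))

/-! ### Counted reduction -/

inductive StepN : ℕ → Tm → Tm → Prop
  | zero (t : Tm) : StepN 0 t t
  | succ {n : ℕ} {t s u : Tm} : Step t s → StepN n s u → StepN (n + 1) t u

theorem exists_stepN {t u : Tm} (h : Relation.ReflTransGen Step t u) : ∃ n, StepN n t u := by
  induction h using Relation.ReflTransGen.head_induction_on with
  | refl => exact ⟨0, .zero _⟩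
  | head h _ ih => obtain ⟨n, hn⟩ := ih; exact ⟨n + 1, .succ h hn⟩

/-- A term in a set closed under making a step, hence divergent. -/
def Div (t : Tm) : Prop := ∃ D : Tm → Prop, D t ∧ ∀ s, D s → ∃ s', D s' ∧ Step s s'

theorem Div.plug (F : FCtx) {t : Tm} (h : Div t) : Div (F.plug t) := by
  obtain ⟨D, ht, hD⟩ := h
  refine ⟨fun s => ∃ r, D r ∧ s = F.plug r, ⟨t, ht, rfl⟩, ?_⟩
  rintro _ ⟨r, hr, rfl⟩
  obtain ⟨r', h1, h2⟩ := hD r hr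
  exact ⟨_, ⟨r', h1, rfl⟩, h2.plug F⟩

theorem Div.not_final {t u : Tm} {n : ℕ} (hd : Div t) (h : StepN n t u) : ∃ u', Step u u' := by
  obtain ⟨D, ht, hD⟩ := hd
  induction h with
  | zero t => obtain ⟨s, _, h⟩ := hD t ht; exact ⟨s, h⟩
  | succ h _ ih =>
    obtain ⟨s, h1, h2⟩ := hD _ ht
    exact ih (h.det h2 ▸ h1)

theorem StepN.split {t u w : Tm} {n : ℕ} (h : StepN n t u) (hu : ∀ u', ¬ Step u u')
    (hw : Relation.ReflTransGen Step t w) : ∃ m ≤ n, StepN m w u := by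
  induction hw using Relation.ReflTransGen.head_induction_on generalizing n with
  | refl => exact ⟨n, le_rfl, h⟩
  | head hs _ ih =>
    cases h with
    | zero => exact absurd hs (hu _)
    | succ h1 h2 =>
      obtain ⟨m, hm, h3⟩ := ih (h1.det hs ▸ h2)
      exact ⟨m, by omega, h3⟩

theorem Rel.adequate {p q : Tm} (hp : Closed p) (hq : Closed q) (hpv : ¬ IsValue p)
    (hpq : Div p ∨ ∃ w p', Step p p' ∧ Relation.ReflTransGen Step p' w ∧
      Relation.ReflTransGen Step q w) (n : ℕ) :
    ∀ t t' u, Rel p q t t' → Closed t → StepN n t u → (IsValue u ∨ ControlStuck u) →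
      ∃ u', Relation.ReflTransGen Step t' u' ∧ (IsValue u → IsValue u') ∧
        (ControlStuck u → ControlStuck u') := by
  induction n using Nat.strong_induction_on with
  | _ n ih =>
  intro t t' u hr hc hn hu
  have hfin : ∀ u', ¬ Step u u' := by
    intro u'
    rcases hu with h | ⟨E, k, s, rfl⟩
    · exact value_no_step h
    · exact plug_no_step
  rcases hr.outcome hp hq hpv hc with ⟨hv, hv'⟩ | ⟨E, E', k, s, s', rfl, rfl, hs, hf, hE⟩ |
      ⟨s, s', h1, h2, h3⟩ | ⟨F, F', rfl, rfl, hF⟩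
  · cases hn with
    | zero =>
      refine ⟨t', .refl, fun _ => hv', ?_⟩
      rintro ⟨E, k, s, rfl⟩
      exact absurd hv value_not_plug
    | succ h _ => exact absurd h (value_no_step hv)
  · generalize ht : E.plug (Tm.shift k s) = t at *
    cases hn with
    | zero =>
      refine ⟨_, .refl, fun hv => ?_, fun _ => ⟨E', k, s', rfl⟩⟩
      exact absurd (ht ▸ hv) value_not_plug
    | succ h _ => exact absurd (ht ▸ h) plug_no_step
  · cases hn with
    | zero => exact absurd h1 (hfin _)
    | @succ m _ r _ h h' =>
      obtain rfl := h.det h1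
      obtain ⟨u', g1, g2⟩ := ih m (by omega) _ s' u h3 (h.closed hc) h' hu
      exact ⟨u', .head h2 g1, g2⟩
  · rcases hpq with hd | ⟨w, p', g1, g2, g3⟩
    · obtain ⟨u', h⟩ := (hd.plug F).not_final hn
      exact absurd h (hfin _)
    · have g4 := g1.plug F
      have g5 := steps_plug F g2
      have hcw : Closed (F.plug w) := steps_closed g5 (g4.closed hc)
      generalize F.plug p = t at *
      cases hn with
      | zero => exact absurd g4 (hfin _)
      | @succ m _ r _ h h' =>
        obtain rfl := h.det g4
        obtain ⟨l, hl, h5⟩ := h'.split hfin g5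
        obtain ⟨u', k1, k2⟩ := ih l (by omega) _ (F'.plug w) u (hF _ _ (.rfl' w)) hcw h5 hu
        exact ⟨u', (steps_plug F' g3).trans k1, k2⟩

theorem Ctx.fv_plug_closed (C : Ctx) {p : Tm} (hp : Closed p) : (C.plug p).fv = C.fv := by
  unfold Closed at hp
  induction C <;> simp_all [Ctx.plug, Ctx.fv, Tm.fv]

theorem half {p q : Tm} (hp : Closed p) (hq : Closed q) (hpv : ¬ IsValue p)
    (hpq : Div p ∨ ∃ w p', Step p p' ∧ Relation.ReflTransGen Step p' w ∧
      Relation.ReflTransGen Step q w) (C : Ctx) (hC : C.fv = ∅) :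
    (EvalsToValue (C.plug p) → EvalsToValue (C.plug q)) ∧
    (EvalsToStuck (C.plug p) → EvalsToStuck (C.plug q)) := by
  have hc : Closed (C.plug p) := by unfold Closed; rw [C.fv_plug_closed hp, hC]
  unfold EvalsToValue EvalsToStuck
  rw [red_eq_step]
  constructor
  · rintro ⟨u, h, hu⟩
    obtain ⟨n, hn⟩ := exists_stepN h
    obtain ⟨u', h1, h2, _⟩ := Rel.adequate hp hq hpv hpq n _ _ u (.ctx C) hc hn (.inl hu)
    exact ⟨u', h1, h2 hu⟩
  · rintro ⟨u, h, hu⟩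
    obtain ⟨n, hn⟩ := exists_stepN h
    obtain ⟨u', h1, _, h2⟩ := Rel.adequate hp hq hpv hpq n _ _ u (.ctx C) hc hn (.inr hu)
    exact ⟨u', h1, h2 hu⟩

/-- A closed delimited term evaluates to a value or diverges. -/
theorem reset_value_or_div {s : Tm} (hc : Closed (Tm.reset s)) :
    (∃ w, IsValue w ∧ Relation.ReflTransGen Step (Tm.reset s) w) ∨ Div (Tm.reset s) := by
  by_cases h : ∃ w, IsValue w ∧ Relation.ReflTransGen Step (Tm.reset s) w
  · exact .inl h
  right
  refine ⟨fun r => Closed r ∧ (∃ r0, r = Tm.reset r0) ∧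
    ¬ ∃ w, IsValue w ∧ Relation.ReflTransGen Step r w, ⟨hc, ⟨s, rfl⟩, h⟩, ?_⟩
  rintro _ ⟨h1, ⟨r0, rfl⟩, h2⟩
  have key : ∀ r', Step (Tm.reset r0) (Tm.reset r') → ∃ s', (Closed s' ∧ (∃ r0, s' = Tm.reset r0) ∧
      ¬ ∃ w, IsValue w ∧ Relation.ReflTransGen Step s' w) ∧ Step (Tm.reset r0) s' := by
    intro r' hs
    refine ⟨_, ⟨hs.closed h1, ⟨r', rfl⟩, ?_⟩, hs⟩
    rintro ⟨w, hw, hw'⟩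
    exact h2 ⟨w, hw, .head hs hw'⟩
  have h1' : Closed r0 := h1
  rcases progress h1' with h | ⟨E, k, s, rfl⟩ | ⟨t', h⟩
  · exact absurd ⟨r0, h, .single (.resetVal _ h)⟩ h2
  · exact key _ (.capture _ _ _)
  · exact key _ (.reset _ _ h)

/-- The open terms `⟨x i⟩` and `(λy.⟨x i⟩) ⟨x i⟩` are related by
the open extension of contextual equivalence: for every closed value `v` (and
any `y` not free in the terms), `⟨v i⟩ ≈ (λy.⟨v i⟩) ⟨v i⟩`. -/
theorem reset_dup_openCtxEquiv (v : Tm) (hv : IsValue v) (hc : Closed v)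
    (y : ℕ) (hy : y ∉ (Tm.reset (Tm.app v idTm)).fv) :
    CtxEquiv (Tm.reset (Tm.app v idTm))
      (Tm.app (Tm.lam y (Tm.reset (Tm.app v idTm))) (Tm.reset (Tm.app v idTm))) := by
  have hp : Closed (Tm.reset (Tm.app v idTm)) := by
    unfold Closed at *; simp [Tm.fv, idTm, hc]
  have hpv : ¬ IsValue (Tm.reset (Tm.app v idTm)) := by rintro ⟨⟩
  have hd := reset_value_or_div hp
  generalize Tm.reset (Tm.app v idTm) = p at *
  have hq : Closed (Tm.app (Tm.lam y p) p) := by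
    unfold Closed at *; simp [Tm.fv, hp]
  have hqv : ¬ IsValue (Tm.app (Tm.lam y p) p) := by rintro ⟨⟩
  have hl : IsValue (Tm.lam y p) := .lam y p
  intro C hC
  suffices h : (Div p ∨ ∃ w p', Step p p' ∧ Relation.ReflTransGen Step p' w ∧
      Relation.ReflTransGen Step (Tm.app (Tm.lam y p) p) w) ∧
      (Div (Tm.app (Tm.lam y p) p) ∨ ∃ w p', Step (Tm.app (Tm.lam y p) p) p' ∧
        Relation.ReflTransGen Step p' w ∧ Relation.ReflTransGen Step p w) by
    obtain ⟨a1, a2⟩ := half hp hq hpv h.1 C hC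
    obtain ⟨b1, b2⟩ := half hq hp hqv h.2 C hC
    exact ⟨⟨a1, b1⟩, ⟨a2, b2⟩⟩
  rcases hd with ⟨w, hw, hs⟩ | hd
  · have hcw := steps_closed hs hp
    have e1 : Relation.ReflTransGen Step (Tm.app (Tm.lam y p) p) (Tm.app (Tm.lam y p) w) :=
      steps_plug (.appR _ hl .hole) hs
    have e2 : Step (Tm.app (Tm.lam y p) w) p := by
      have := Step.beta y p w hw
      rwa [subst_of_not_mem hcw hy] at this
    have e3 : Relation.ReflTransGen Step (Tm.app (Tm.lam y p) p) w :=
      e1.trans (.head e2 hs)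
    constructor
    · right
      rcases hs.cases_head with rfl | ⟨p', h1, h2⟩
      · exact absurd hw hpv
      · exact ⟨w, p', h1, h2, e3⟩
    · right
      rcases e3.cases_head with h | ⟨p', h1, h2⟩
      · exact absurd (h ▸ hw) hqv
      · exact ⟨w, p', h1, h2, hs⟩
  · exact ⟨.inl hd, .inl (hd.plug (.appR _ hl .hole))⟩

end LambdaS
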